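/- Let {σ,τ} be any of the nine pairs {123,213}, {132,213}, {132,231}, {132,312}, {213,231}, {213,312}, {231,312}, {231,321}, {312,321}. Then the generating function B(z) = Σ_{n≥0} |P_n(σ,τ)| zⁿ for set partitions avoiding both σ and τ equals (2 − 3z + z² − z√(1−6z+z²)) / (2(1 − 3z + 3z²)); equivalently, B(z) satisfies the polynomial identity (2(1−3z+3z²)B(z) − (2−3z+z²))² = z²(1−6z+z²). -/

import Mathlib

/-! ### Patterns of length 3 and 4 as permutations (0-indexed values) -/

def p123 : Equiv.Perm (Fin 3) :=
  ⟨![0,1,2], ![0,1,2], by intro x; fin_cases x <;> rfl, by intro x; fin_cases x <;> rfl⟩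
def p132 : Equiv.Perm (Fin 3) :=
  ⟨![0,2,1], ![0,2,1], by intro x; fin_cases x <;> rfl, by intro x; fin_cases x <;> rfl⟩
def p213 : Equiv.Perm (Fin 3) :=
  ⟨![1,0,2], ![1,0,2], by intro x; fin_cases x <;> rfl, by intro x; fin_cases x <;> rfl⟩
def p231 : Equiv.Perm (Fin 3) :=
  ⟨![1,2,0], ![2,0,1], by intro x; fin_cases x <;> rfl, by intro x; fin_cases x <;> rfl⟩
def p312 : Equiv.Perm (Fin 3) :=
  ⟨![2,0,1], ![1,2,0], by intro x; fin_cases x <;> rfl, by intro x; fin_cases x <;> rfl⟩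
def p321 : Equiv.Perm (Fin 3) :=
  ⟨![2,1,0], ![2,1,0], by intro x; fin_cases x <;> rfl, by intro x; fin_cases x <;> rfl⟩
def p1342 : Equiv.Perm (Fin 4) :=
  ⟨![0,2,3,1], ![0,3,1,2], by intro x; fin_cases x <;> rfl, by intro x; fin_cases x <;> rfl⟩
def p1324 : Equiv.Perm (Fin 4) :=
  ⟨![0,2,1,3], ![0,2,1,3], by intro x; fin_cases x <;> rfl, by intro x; fin_cases x <;> rfl⟩

/-! ### Perfect matchings of `[2n] = {1, …, 2n}` as finsets of pairs `(i,j)`, `i < j` -/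

/-- `M` is a perfect matching of `{1, …, 2n}`. -/
def IsPerfectMatching (n : ℕ) (M : Finset (ℕ × ℕ)) : Prop :=
  (∀ p ∈ M, p.1 < p.2 ∧ 1 ≤ p.1 ∧ p.2 ≤ 2 * n) ∧
  ∀ x, 1 ≤ x → x ≤ 2 * n → ∃! p, p ∈ M ∧ (p.1 = x ∨ p.2 = x)

/-- The matching `M` contains the pattern `τ ∈ S_k`: there are
`i_1 < i_2 < ⋯ < i_{2k}` with `(i_a, i_{2k+1-τ(a)}) ∈ M` for all `1 ≤ a ≤ k`
(written here 0-indexed). -/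
def MatchContains {k : ℕ} (τ : Equiv.Perm (Fin k)) (M : Finset (ℕ × ℕ)) : Prop :=
  ∃ f : Fin (2 * k) → ℕ, StrictMono f ∧
    ∀ a : Fin k,
      (f ⟨a.1, by have := a.isLt; omega⟩,
       f ⟨2 * k - 1 - (τ a).1, by have := (τ a).isLt; omega⟩) ∈ M

def MatchAvoids {k : ℕ} (τ : Equiv.Perm (Fin k)) (M : Finset (ℕ × ℕ)) : Prop :=
  ¬ MatchContains τ M

/-! ### Dyck paths as lists of booleans (`true` = east step, `false` = south step) -/

/-- A Dyck path of semilength `n`, from `(0,n)` to `(n,0)`, staying weakly above `y = n - x`. -/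
def IsDyckPath (n : ℕ) (t : List Bool) : Prop :=
  t.length = 2 * n ∧ t.count true = n ∧
  ∀ i, (t.take i).count false ≤ (t.take i).count true

/-- The height (distance above the diagonal) of the `i`-th vertex of the path `t`. -/
def pathHeight (t : List Bool) (i : ℕ) : ℤ :=
  ((t.take i).count true : ℤ) - ((t.take i).count false : ℤ)

/-- `s` lies weakly below `t` (for paths of the same semilength). -/
def WeaklyBelow (s t : List Bool) : Prop := ∀ i, pathHeight s i ≤ pathHeight t i

/-- The shape of a matching of `[2n]`: an east step for each opener, a south step for
each closer. -/
def shapeOf (n : ℕ) (M : Finset (ℕ × ℕ)) : List Bool :=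
  (List.range (2 * n)).map fun x => decide ((x + 1) ∈ M.image Prod.fst)

/-- Number of returns of a path: south steps ending on the diagonal. -/
def returnsOf (t : List Bool) : ℕ :=
  ((Finset.range t.length).filter fun i =>
    t[i]? = some false ∧ (t.take (i+1)).count true = (t.take (i+1)).count false).card

/-- Height sequence of a path, as natural numbers. -/
def hseq (t : List Bool) (i : ℕ) : ℕ := (t.take i).count true - (t.take i).count false

/-- `η(F)`: the number of indices `0 ≤ i ≤ 2n` with `h_i = 2`. -/
def etaOf (n : ℕ) (t : List Bool) : ℕ :=
  ((Finset.range (2 * n + 1)).filter fun i => hseq t i = 2).card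

/-! ### Full rook placements on Ferrers boards -/

/-- The square in column `c`, row `r` (both 1-indexed from the bottom left) belongs to the
Ferrers board with border path `t ∈ F_n`. -/
def InBoard (n : ℕ) (t : List Bool) (c r : ℕ) : Prop :=
  1 ≤ c ∧ 1 ≤ r ∧ ∃ i, c ≤ (t.take i).count true ∧ (t.take i).count false + r ≤ n

/-- `R` is a full rook placement on the Ferrers board with border path `t ∈ F_n`:
one rook in each of the `n` rows and `n` columns. -/
def IsFullRookPlacement (n : ℕ) (t : List Bool) (R : Finset (ℕ × ℕ)) : Prop :=
  (∀ p ∈ R, InBoard n t p.1 p.2) ∧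
  (∀ c, 1 ≤ c → c ≤ n → ∃! p, p ∈ R ∧ p.1 = c) ∧
  (∀ r, 1 ≤ r → r ≤ n → ∃! p, p ∈ R ∧ p.2 = r)

/-- The rooks of `R` lying in the rectangle `Γ(V_i)` determined by the `i`-th border vertex. -/
def rectRooks (n : ℕ) (t : List Bool) (R : Finset (ℕ × ℕ)) (i : ℕ) : Finset (ℕ × ℕ) :=
  R.filter fun p => p.1 ≤ (t.take i).count true ∧ p.2 + (t.take i).count false ≤ n

/-- Length of the longest increasing sequence (in both coordinates) in a finite point set. -/
def lisLen (S : Finset (ℕ × ℕ)) : ℕ :=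
  (S.powerset.filter fun T => ∀ p ∈ T, ∀ q ∈ T, p.1 < q.1 → p.2 < q.2).sup Finset.card

/-- The full rook placement `R` on the board with border `t ∈ F_n` contains the pattern `τ`:
some rectangle `Γ(V_i)` contains an occurrence of `τ`. -/
def PlacementContains {k : ℕ} (τ : Equiv.Perm (Fin k)) (n : ℕ) (t : List Bool)
    (R : Finset (ℕ × ℕ)) : Prop :=
  ∃ i ≤ 2 * n, ∃ f : Fin k → ℕ × ℕ,
    (∀ a, f a ∈ R ∧ (f a).1 ≤ (t.take i).count true ∧ (f a).2 + (t.take i).count false ≤ n) ∧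
    (∀ a b : Fin k, a < b → (f a).1 < (f b).1) ∧
    (∀ a b : Fin k, τ a < τ b → (f a).2 < (f b).2)

def PlacementAvoids {k : ℕ} (τ : Equiv.Perm (Fin k)) (n : ℕ) (t : List Bool)
    (R : Finset (ℕ × ℕ)) : Prop :=
  ¬ PlacementContains τ n t R

/-- `R` is board-minimal on the board with border `t`: every peak corner square holds a rook. -/
def BoardMinimal (n : ℕ) (t : List Bool) (R : Finset (ℕ × ℕ)) : Prop :=
  ∀ i, t[i]? = some true → t[i+1]? = some false →
    ((t.take (i+1)).count true, n - (t.take (i+1)).count false) ∈ R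

/-- Board-minimal full rook placements on boards of `F_n` avoiding the pattern `σ`,
recorded as pairs (border path, rook set). -/
def MinPlacements (n : ℕ) {k : ℕ} (σ : Equiv.Perm (Fin k)) :
    Set (List Bool × Finset (ℕ × ℕ)) :=
  {tR | IsDyckPath n tR.1 ∧ IsFullRookPlacement n tR.1 tR.2 ∧ BoardMinimal n tR.1 tR.2 ∧
        PlacementAvoids σ n tR.1 tR.2}

/-! ### Pattern avoidance in permutations -/

def PermContains {n k : ℕ} (τ : Equiv.Perm (Fin k)) (π : Equiv.Perm (Fin n)) : Prop :=
  ∃ f : Fin k → Fin n, StrictMono f ∧ ∀ a b : Fin k, τ a < τ b → π (f a) < π (f b)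

def PermAvoids {n k : ℕ} (τ : Equiv.Perm (Fin k)) (π : Equiv.Perm (Fin n)) : Prop :=
  ¬ PermContains τ π

/-- The full rook placement associated to a permutation of `[n]`. -/
def permPlacement {n : ℕ} (π : Equiv.Perm (Fin n)) : Finset (ℕ × ℕ) :=
  Finset.univ.image fun i : Fin n => ((i : ℕ) + 1, (π i : ℕ) + 1)

/-! ### Matchings with fixed points -/

/-- A (not necessarily perfect) matching on `{1, …, m}`: pairwise disjoint pairs. -/
def IsPartialMatching (m : ℕ) (M : Finset (ℕ × ℕ)) : Prop :=
  (∀ p ∈ M, p.1 < p.2 ∧ 1 ≤ p.1 ∧ p.2 ≤ m) ∧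
  ∀ p ∈ M, ∀ q ∈ M, p ≠ q → p.1 ≠ q.1 ∧ p.1 ≠ q.2 ∧ p.2 ≠ q.1 ∧ p.2 ≠ q.2

/-- The fixed points (unmatched vertices) of a matching on `{1, …, m}`. -/
def fixedPts (m : ℕ) (M : Finset (ℕ × ℕ)) : Finset ℕ :=
  (Finset.Icc 1 m).filter fun x => ∀ p ∈ M, p.1 ≠ x ∧ p.2 ≠ x

/-- The matched vertices of a matching on `{1, …, m}`. -/
def matchedSet (m : ℕ) (M : Finset (ℕ × ℕ)) : Finset ℕ :=
  (Finset.Icc 1 m).filter fun x => ∃ p ∈ M, p.1 = x ∨ p.2 = x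

/-- The rank (1-based) of `x` inside the finset `S`. -/
def rankIn (S : Finset ℕ) (x : ℕ) : ℕ := (S.filter (· ≤ x)).card

/-- The matching obtained by removing the fixed points and relabeling increasingly. -/
def relabeled (m : ℕ) (M : Finset (ℕ × ℕ)) : Finset (ℕ × ℕ) :=
  M.image fun p => (rankIn (matchedSet m M) p.1, rankIn (matchedSet m M) p.2)

/-! ### Set partitions -/

/-- `(i,j)` is an arc of the set partition `P` of `{1, …, n}`: `i < j` lie in a common block
with no element of that block strictly between them. -/
def PartArc {n : ℕ} (P : Finpartition (Finset.Icc 1 n)) (i j : ℕ) : Prop :=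
  i < j ∧ ∃ B ∈ P.parts, i ∈ B ∧ j ∈ B ∧ ∀ x ∈ B, ¬(i < x ∧ x < j)

/-- The set partition `P` contains the pattern `τ ∈ S_k`. -/
def PartContains {k n : ℕ} (τ : Equiv.Perm (Fin k)) (P : Finpartition (Finset.Icc 1 n)) : Prop :=
  ∃ f : Fin (2 * k) → ℕ, StrictMono f ∧
    ∀ a : Fin k,
      PartArc P (f ⟨a.1, by have := a.isLt; omega⟩)
        (f ⟨2 * k - 1 - (τ a).1, by have := (τ a).isLt; omega⟩)

def PartAvoids {k n : ℕ} (τ : Equiv.Perm (Fin k)) (P : Finpartition (Finset.Icc 1 n)) : Prop :=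
  ¬ PartContains τ P

/-! ### Counting functions -/

/-- `|M_n(τ)|`: the number of `τ`-avoiding perfect matchings of `[2n]`. -/
noncomputable def mcount {k : ℕ} (τ : Equiv.Perm (Fin k)) (n : ℕ) : ℕ :=
  {M : Finset (ℕ × ℕ) | IsPerfectMatching n M ∧ MatchAvoids τ M}.ncard

/-- `|M_n(σ,τ)|`: the number of perfect matchings of `[2n]` avoiding both `σ` and `τ`. -/
noncomputable def mcount2 {k : ℕ} (σ τ : Equiv.Perm (Fin k)) (n : ℕ) : ℕ :=
  {M : Finset (ℕ × ℕ) | IsPerfectMatching n M ∧ MatchAvoids σ M ∧ MatchAvoids τ M}.ncard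

/-- `|P_n(τ)|`: the number of `τ`-avoiding set partitions of `[n]`. -/
noncomputable def pcount {k : ℕ} (τ : Equiv.Perm (Fin k)) (n : ℕ) : ℕ :=
  Nat.card {P : Finpartition (Finset.Icc 1 n) // PartAvoids τ P}

/-- `|P_n(σ,τ)|`: the number of set partitions of `[n]` avoiding both `σ` and `τ`. -/
noncomputable def pcount2 {k : ℕ} (σ τ : Equiv.Perm (Fin k)) (n : ℕ) : ℕ :=
  Nat.card {P : Finpartition (Finset.Icc 1 n) // PartAvoids σ P ∧ PartAvoids τ P}

/-- `|S_n(τ)|`: the number of `τ`-avoiding permutations of `[n]`. -/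
noncomputable def scount {k : ℕ} (τ : Equiv.Perm (Fin k)) (n : ℕ) : ℕ :=
  Nat.card {π : Equiv.Perm (Fin n) // PermAvoids τ π}

/-- The nine pairs of length-3 patterns in shape-Wilf-equivalence class I. -/
def ClassIPair (σ τ : Equiv.Perm (Fin 3)) : Prop :=
  (σ = p123 ∧ τ = p213) ∨ (σ = p132 ∧ τ = p213) ∨ (σ = p132 ∧ τ = p231) ∨
  (σ = p132 ∧ τ = p312) ∨ (σ = p213 ∧ τ = p231) ∨ (σ = p213 ∧ τ = p312) ∨
  (σ = p231 ∧ τ = p312) ∨ (σ = p231 ∧ τ = p321) ∨ (σ = p312 ∧ τ = p321)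


def upI (i a : ℕ) : ℕ := if a < i then a else a + 1

def Gp (Bad : ℕ → ℕ → ℕ → Prop) (m0 p a b : ℕ) : Prop :=
  a < m0 ∧ b < m0 ∧ Bad p (upI p b) (upI p a)

def Rn (Bad : ℕ → ℕ → ℕ → Prop) (m : ℕ) (R : ℕ → ℕ → Prop) (i a b : ℕ) : Prop :=
  a < m - 1 ∧ b < m - 1 ∧ (R (upI i a) (upI i b) ∨ Bad i (upI i b) (upI i a))

def Rs (m : ℕ) (R : ℕ → ℕ → Prop) (a b : ℕ) : Prop := a < m ∧ b < m ∧ R a b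

open Classical in
noncomputable def cnt (Bad : ℕ → ℕ → ℕ → Prop) : ℕ → ℕ → (ℕ → ℕ → Prop) → ℕ
  | 0, m, _ => if m = 0 then 1 else 0
  | N+1, m, R => (cnt Bad N m R + cnt Bad N (m+1) (Rs m R)) +
      ∑ i ∈ Finset.range m, if ∃ b < m, R b i then 0 else
        (cnt Bad N (m-1) (Rn Bad m R i) + cnt Bad N (m-1+1) (Rs (m-1) (Rn Bad m R i)))

theorem cnt_ext (Bad : ℕ → ℕ → ℕ → Prop) (N : ℕ) : ∀ (m : ℕ) (R R' : ℕ → ℕ → Prop),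
    (∀ a b, a < m → b < m → (R a b ↔ R' a b)) → cnt Bad N m R = cnt Bad N m R' := by
  induction N with
  | zero => intro m R R' h; simp [cnt]
  | succ N ih =>
    intro m R R' h
    simp only [cnt]
    have hn : ∀ i, i < m → ∀ a b, (Rn Bad m R i a b ↔ Rn Bad m R' i a b) := by
      intro i hi a b
      unfold Rn
      by_cases ha : a < m - 1
      · by_cases hb : b < m - 1
        · have h1 : upI i a < m := by unfold upI; split_ifs <;> omega
          have h2 : upI i b < m := by unfold upI; split_ifs <;> omega
          rw [h _ _ h1 h2]
        · simp [hb]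
      · simp [ha]
    congr 1
    · congr 1
      · exact ih _ _ _ h
      · apply ih; intro a b _ _; unfold Rs
        constructor
        · rintro ⟨h1, h2, h3⟩; exact ⟨h1, h2, (h _ _ h1 h2).1 h3⟩
        · rintro ⟨h1, h2, h3⟩; exact ⟨h1, h2, (h _ _ h1 h2).2 h3⟩
    · apply Finset.sum_congr rfl
      intro i hi
      rw [Finset.mem_range] at hi
      have e : (∃ b < m, R b i) ↔ (∃ b < m, R' b i) := by
        constructor
        · rintro ⟨b, hb, hr⟩; exact ⟨b, hb, (h _ _ hb hi).1 hr⟩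
        · rintro ⟨b, hb, hr⟩; exact ⟨b, hb, (h _ _ hb hi).2 hr⟩
      have hR : Rn Bad m R i = Rn Bad m R' i := by
        funext a b; exact propext (hn i hi a b)
      by_cases hb : ∃ b < m, R b i
      · rw [if_pos hb, if_pos (e.1 hb)]
      · rw [if_neg hb, if_neg (fun h' => hb (e.2 h')), hR]

theorem cnt_scoped (Bad : ℕ → ℕ → ℕ → Prop) (N m : ℕ) (R : ℕ → ℕ → Prop) :
    cnt Bad N m (Rs m R) = cnt Bad N m R :=
  cnt_ext _ _ _ _ _ fun a b ha hb => by simp [Rs, ha, hb]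

theorem cnt_dead (Bad : ℕ → ℕ → ℕ → Prop) (N : ℕ) : ∀ (m : ℕ) (R : ℕ → ℕ → Prop) (a b : ℕ),
    a < m → b < m → a ≠ b → R a b → R b a → cnt Bad N m R = 0 := by
  induction N with
  | zero => intro m R a b ha; intros; simp [cnt]; omega
  | succ N ih =>
    intro m R a b ha hb hab h1 h2
    simp only [cnt]
    rw [ih m R a b ha hb hab h1 h2, ih (m+1) (Rs m R) a b (by omega) (by omega) hab
      ⟨ha, hb, h1⟩ ⟨hb, ha, h2⟩]
    simp only [zero_add]
    apply Finset.sum_eq_zero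
    intro i hi
    rw [Finset.mem_range] at hi
    split_ifs with hbl
    · rfl
    · have hia : i ≠ a := by rintro rfl; exact hbl ⟨b, hb, h2⟩
      have hib : i ≠ b := by rintro rfl; exact hbl ⟨a, ha, h1⟩
      obtain ⟨a', ha', ea⟩ : ∃ a', a' < m - 1 ∧ upI i a' = a := by
        refine ⟨if a < i then a else a - 1, ?_, ?_⟩
        · split_ifs <;> omega
        · unfold upI; split_ifs <;> omega
      obtain ⟨b', hb', eb⟩ : ∃ a', a' < m - 1 ∧ upI i a' = b := by
        refine ⟨if b < i then b else b - 1, ?_, ?_⟩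
        · split_ifs <;> omega
        · unfold upI; split_ifs <;> omega
      have hab' : a' ≠ b' := by rintro rfl; exact hab (ea.symm.trans eb)
      have r1 : Rn Bad m R i a' b' := ⟨ha', hb', Or.inl (by rwa [ea, eb])⟩
      have r2 : Rn Bad m R i b' a' := ⟨hb', ha', Or.inl (by rwa [ea, eb])⟩
      rw [ih _ _ a' b' ha' hb' hab' r1 r2, ih _ _ a' b' (by omega) (by omega) hab'
        ⟨ha', hb', r1⟩ ⟨hb', ha', r2⟩, add_zero]

def StarP (Bad : ℕ → ℕ → ℕ → Prop) : Prop := ∀ N m m0, 1 ≤ m0 → m0 ≤ m →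
  ∑ p ∈ Finset.range (m0 + 1), cnt Bad N m (Gp Bad m0 p) = 2 * cnt Bad N m (fun _ _ => False)

def Wt : ℕ → ℕ → ℕ
  | 0, m => if m = 0 then 1 else 0
  | N+1, 0 => Wt N 0 + Wt N 1
  | N+1, 1 => (Wt N 1 + Wt N 2) + (Wt N 0 + Wt N 1)
  | N+1, m+2 => (Wt N (m+2) + Wt N (m+3)) + 2 * (Wt N (m+1) + Wt N (m+2))

theorem cnt_bot_succ (Bad : ℕ → ℕ → ℕ → Prop) (N m : ℕ) :
    cnt Bad (N+1) m (fun _ _ => False) =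
      (cnt Bad N m (fun _ _ => False) + cnt Bad N (m+1) (fun _ _ => False)) +
      ∑ i ∈ Finset.range m,
        (cnt Bad N (m-1) (Gp Bad (m-1) i) + cnt Bad N (m-1+1) (Gp Bad (m-1) i)) := by
  have e : ∀ i, Rn Bad m (fun _ _ => False) i = Gp Bad (m-1) i := by
    intro i; funext a b; simp [Rn, Gp]
  have e2 : Rs m (fun _ _ => False) = fun _ _ => False := by funext a b; simp [Rs]
  have e3 : ∀ i, Rs (m-1) (Gp Bad (m-1) i) = Gp Bad (m-1) i := by
    intro i; funext a b; simp [Rs, Gp]; tauto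
  simp only [cnt, e, e2, e3]
  simp

theorem cnt_eq_Wt (Bad : ℕ → ℕ → ℕ → Prop) (hS : StarP Bad) (N : ℕ) : ∀ m,
    cnt Bad N m (fun _ _ => False) = Wt N m := by
  induction N with
  | zero => intro m; simp [cnt, Wt]
  | succ N ih =>
    intro m
    rw [cnt_bot_succ, ih, ih]
    match m with
    | 0 => simp [Wt]
    | 1 =>
      have : Gp Bad 0 0 = fun _ _ => False := by funext a b; simp [Gp]
      simp [Wt, this, ih]
    | m+2 =>
      rw [Finset.sum_add_distrib]
      have h1 := hS N (m+1) (m+1) (by omega) le_rfl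
      have h2 := hS N (m+2) (m+1) (by omega) (by omega)
      simp only [show m + 2 - 1 = m + 1 by omega]
      rw [h1, h2, ih, ih]
      simp [Wt]; ring

/-- simple classes -/
theorem star_simple (Bad : ℕ → ℕ → ℕ → Prop)
    (h : ∀ m0, 1 ≤ m0 → ∃ p1 p2, p1 ≠ p2 ∧ p1 ≤ m0 ∧ p2 ≤ m0 ∧ ∀ p ≤ m0,
      ((p = p1 ∨ p = p2) → ∀ a b, a < m0 → b < m0 → ¬ Gp Bad m0 p a b) ∧
      (p ≠ p1 → p ≠ p2 → ∃ a b, a ≠ b ∧ Gp Bad m0 p a b ∧ Gp Bad m0 p b a)) : StarP Bad := by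
  intro N m m0 h1 h2
  obtain ⟨p1, p2, hne, hp1, hp2, hp⟩ := h m0 h1
  rw [← Finset.sum_subset (s₁ := {p1, p2})]
  · rw [Finset.sum_pair hne]
    have : ∀ p ≤ m0, (p = p1 ∨ p = p2) → cnt Bad N m (Gp Bad m0 p) = cnt Bad N m (fun _ _ => False) := by
      intro p hpm hpp
      congr 1
      funext a b
      apply propext
      constructor
      · intro hg; exact (hp p hpm).1 hpp a b hg.1 hg.2.1 hg
      · exact False.elim
    rw [this p1 hp1 (Or.inl rfl), this p2 hp2 (Or.inr rfl)]; ring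
  · intro p hpp
    simp only [Finset.mem_insert, Finset.mem_singleton] at hpp
    rw [Finset.mem_range]; rcases hpp with rfl | rfl <;> omega
  · intro p hpm hpn
    simp only [Finset.mem_insert, Finset.mem_singleton, not_or] at hpn
    rw [Finset.mem_range] at hpm
    obtain ⟨a, b, hab, r1, r2⟩ := (hp p (by omega)).2 hpn.1 hpn.2
    exact cnt_dead _ _ _ _ a b (lt_of_lt_of_le r1.1 h2) (lt_of_lt_of_le r1.2.1 h2) hab r1 r2

theorem star_good (Bad : ℕ → ℕ → ℕ → Prop)
    (h : ∀ m m0 i, 1 ≤ m0 → m0 ≤ m → i < m → ∃ p1 p2, p1 ≠ p2 ∧ p1 ≤ m0 ∧ p2 ≤ m0 ∧ ∀ p ≤ m0,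
      ((p = p1 ∨ p = p2) → (∀ b, ¬ Gp Bad m0 p b i) ∧ ∀ a b, a < m-1 → b < m-1 →
        Gp Bad m0 p (upI i a) (upI i b) → Bad i (upI i b) (upI i a)) ∧
      (p ≠ p1 → p ≠ p2 → (∃ b, Gp Bad m0 p b i) ∨
        ∃ a b, a ≠ b ∧ Rn Bad m (Gp Bad m0 p) i a b ∧ Rn Bad m (Gp Bad m0 p) i b a)) :
    StarP Bad := by
  intro N
  induction N with
  | zero => intro m m0 h1 h2; simp [cnt, show m ≠ 0 by omega]
  | succ N ih =>
    intro m m0 h1 h2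
    rw [cnt_bot_succ]
    simp only [cnt]
    rw [Finset.sum_add_distrib, Finset.sum_add_distrib, ih m m0 h1 h2, Finset.sum_comm]
    have e2 : ∀ p, Rs m (Gp Bad m0 p) = Gp Bad m0 p := by
      intro p; funext a b; apply propext; simp only [Rs, Gp]
      constructor
      · tauto
      · rintro ⟨ha, hb, hc⟩; exact ⟨by omega, by omega, ha, hb, hc⟩
    simp only [e2]
    rw [ih (m+1) m0 h1 (by omega), mul_add, mul_add, Finset.mul_sum]
    congr 1
    apply Finset.sum_congr rfl
    intro i hi
    rw [Finset.mem_range] at hi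
    obtain ⟨p1, p2, hne, hp1, hp2, hp⟩ := h m m0 i h1 h2 hi
    rw [← Finset.sum_subset (s₁ := {p1, p2})]
    · rw [Finset.sum_pair hne]
      have : ∀ p ≤ m0, (p = p1 ∨ p = p2) → (¬ ∃ b < m, Gp Bad m0 p b i) ∧
          Rn Bad m (Gp Bad m0 p) i = Gp Bad (m-1) i := by
        intro p hpm hpp
        obtain ⟨h3, h4⟩ := (hp p hpm).1 hpp
        refine ⟨by rintro ⟨b, -, hb⟩; exact h3 b hb, ?_⟩
        funext a b
        apply propext
        constructor
        · rintro ⟨ha, hb, hc | hc⟩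
          · exact ⟨ha, hb, h4 a b ha hb hc⟩
          · exact ⟨ha, hb, hc⟩
        · rintro ⟨ha, hb, hc⟩; exact ⟨ha, hb, Or.inr hc⟩
      have e3 : ∀ i, Rs (m-1) (Gp Bad (m-1) i) = Gp Bad (m-1) i := by
        intro i; funext a b; simp [Rs, Gp]; tauto
      obtain ⟨a1, b1⟩ := this p1 hp1 (Or.inl rfl)
      obtain ⟨a2, b2⟩ := this p2 hp2 (Or.inr rfl)
      rw [if_neg a1, if_neg a2, b1, b2, e3]; ring
    · intro p hpp
      simp only [Finset.mem_insert, Finset.mem_singleton] at hpp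
      rw [Finset.mem_range]; rcases hpp with rfl | rfl <;> omega
    · intro p hpm hpn
      simp only [Finset.mem_insert, Finset.mem_singleton, not_or] at hpn
      rw [Finset.mem_range] at hpm
      rcases (hp p (by omega)).2 hpn.1 hpn.2 with ⟨b, hb⟩ | ⟨a, b, hab, r1, r2⟩
      · rw [if_pos ⟨b, lt_of_lt_of_le hb.1 h2, hb⟩]
      · split_ifs
        · rfl
        · rw [cnt_dead _ _ _ _ a b r1.1 r1.2.1 hab r1 r2,
            cnt_dead _ _ _ _ a b (by have := r1.1; omega) (by have := r1.2.1; omega) hab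
              ⟨r1.1, r1.2.1, r1⟩ ⟨r1.2.1, r1.1, r2⟩, add_zero]

def B123 (x y z : ℕ) : Prop := z < y ∧ y < x
def B132 (x y z : ℕ) : Prop := z < x ∧ x < y
def B213 (x y z : ℕ) : Prop := y < z ∧ z < x
def B231 (x y z : ℕ) : Prop := y < x ∧ x < z
def B312 (x y z : ℕ) : Prop := x < z ∧ z < y
def B321 (x y z : ℕ) : Prop := x < y ∧ y < z

def BOr (B B' : ℕ → ℕ → ℕ → Prop) (x y z : ℕ) : Prop := B x y z ∨ B' x y z

theorem starA : StarP (BOr B123 B213) := by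
  apply star_simple
  intro m0 h
  refine ⟨0, 1, by omega, by omega, by omega, ?_⟩
  intro p hp
  constructor
  · intro h1 a b ha hb; simp only [Gp, BOr, B123, B213, upI]; split_ifs <;> omega
  · intro h1 h2
    refine ⟨0, 1, by omega, ?_⟩
    simp only [Gp, BOr, B123, B213, upI]; split_ifs <;> omega

theorem starC : StarP (BOr B132 B231) := by
  apply star_simple
  intro m0 h
  refine ⟨0, m0, by omega, by omega, by omega, ?_⟩
  intro p hp
  constructor
  · intro h1 a b ha hb; simp only [Gp, BOr, B132, B231, upI]; split_ifs <;> omega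
  · intro h1 h2
    refine ⟨0, m0-1, by omega, ?_⟩
    simp only [Gp, BOr, B132, B231, upI]; split_ifs <;> omega

theorem starI : StarP (BOr B312 B321) := by
  apply star_simple
  intro m0 h
  refine ⟨m0-1, m0, by omega, by omega, by omega, ?_⟩
  intro p hp
  constructor
  · intro h1 a b ha hb; simp only [Gp, BOr, B312, B321, upI]; split_ifs <;> omega
  · intro h1 h2
    refine ⟨m0-2, m0-1, by omega, ?_⟩
    simp only [Gp, BOr, B312, B321, upI]; split_ifs <;> omega

theorem starB : StarP (BOr B132 B213) := by
  apply star_good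
  intro m m0 i h h' hi
  refine ⟨0, min (i+1) m0, by omega, by omega, by omega, ?_⟩
  intro p hp
  constructor
  · intro h1
    constructor
    · intro b; simp only [Gp, BOr, B132, B213, upI]; split_ifs <;> omega
    · intro a b ha hb; simp only [Gp, BOr, B132, B213, upI]; split_ifs <;> omega
  · intro h1 h2
    by_cases c1 : i + 1 < p
    · left; refine ⟨i+1, ?_⟩
      simp only [Gp, BOr, B132, B213, upI]; split_ifs <;> omega
    · by_cases c2 : i < m0
      · left; refine ⟨0, ?_⟩
        simp only [Gp, BOr, B132, B213, upI]; split_ifs <;> omega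
      · right; refine ⟨0, p, by omega, ?_⟩
        simp only [Rn, Gp, BOr, B132, B213, upI]; split_ifs <;> omega

theorem starF : StarP (BOr B213 B312) := by
  apply star_good
  intro m m0 i h h' hi
  refine ⟨min i (m0-1), min (i+1) m0, by omega, by omega, by omega, ?_⟩
  intro p hp
  constructor
  · intro h1
    constructor
    · intro b; simp only [Gp, BOr, B312, B213, upI]; split_ifs <;> omega
    · intro a b ha hb; simp only [Gp, BOr, B312, B213, upI]; split_ifs <;> omega
  · intro h1 h2
    by_cases c1 : i + 1 < p
    · left; refine ⟨i+1, ?_⟩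
      simp only [Gp, BOr, B312, B213, upI]; split_ifs <;> omega
    · by_cases c2 : i < m0
      · left; refine ⟨p, ?_⟩
        simp only [Gp, BOr, B312, B213, upI]; split_ifs <;> omega
      · right; refine ⟨p, p+1, by omega, ?_⟩
        simp only [Rn, Gp, BOr, B312, B213, upI]; split_ifs <;> omega

theorem cnt_G_aux (N : ℕ) : ∀ (m m0 : ℕ) (R : ℕ → ℕ → Prop), 1 ≤ m0 → m0 ≤ m →
    ∑ p ∈ Finset.range m0, cnt (BOr B231 B312) N m (fun a b => R a b ∨ Gp (BOr B231 B312) m0 p a b)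
      = cnt (BOr B231 B312) N m R := by
  induction N with
  | zero => intro m m0 R h1 h2; simp [cnt, show m ≠ 0 by omega]
  | succ N ih =>
    intro m m0 R h1 h2
    simp only [cnt]
    rw [Finset.sum_add_distrib, Finset.sum_add_distrib, ih m m0 R h1 h2, Finset.sum_comm]
    have e2 : ∀ p, Rs m (fun a b => R a b ∨ Gp (BOr B231 B312) m0 p a b) =
        fun a b => Rs m R a b ∨ Gp (BOr B231 B312) m0 p a b := by
      intro p; funext a b; apply propext; simp only [Rs, Gp]
      constructor
      · tauto
      · rintro (⟨ha, hb, hc⟩ | ⟨ha, hb, hc⟩)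
        · tauto
        · exact ⟨by omega, by omega, Or.inr ⟨ha, hb, hc⟩⟩
    simp only [e2]
    rw [ih (m+1) m0 _ h1 (by omega)]
    congr 1
    apply Finset.sum_congr rfl
    intro i hi
    rw [Finset.mem_range] at hi
    by_cases hblk : ∃ b < m, R b i
    · rw [if_pos hblk]
      apply Finset.sum_eq_zero
      intro p _
      obtain ⟨b, hb, hr⟩ := hblk
      rw [if_pos ⟨b, hb, Or.inl hr⟩]
    · rw [if_neg hblk]
      by_cases him : i < m0
      · rw [Finset.sum_eq_single i]
        · rw [if_neg]
          · have : Rn (BOr B231 B312) m (fun a b => R a b ∨ Gp (BOr B231 B312) m0 i a b) i =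
                Rn (BOr B231 B312) m R i := by
              funext a b
              apply propext
              have : Gp (BOr B231 B312) m0 i (upI i a) (upI i b) → BOr B231 B312 i (upI i b) (upI i a) := by
                simp only [Gp, BOr, B231, B312, upI]; split_ifs <;> omega
              unfold Rn
              tauto
            rw [this]
          · rintro ⟨b, hb, hr | hr⟩
            · exact hblk ⟨b, hb, hr⟩
            · revert hr
              simp only [Gp, BOr, B231, B312, upI]; split_ifs <;> omega
        · intro p hp hpi
          rw [Finset.mem_range] at hp
          rw [if_pos]
          refine ⟨p, by omega, Or.inr ?_⟩
          simp only [Gp, BOr, B231, B312, upI]; split_ifs <;> omega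
        · intro h; simp at h; omega
      · have hn : ∀ p, p < m0 → Rn (BOr B231 B312) m (fun a b => R a b ∨ Gp (BOr B231 B312) m0 p a b) i =
            fun a b => Rn (BOr B231 B312) m R i a b ∨ Gp (BOr B231 B312) m0 p a b := by
          intro p hp
          funext a b
          apply propext
          have : (a < m - 1 ∧ b < m - 1 ∧ Gp (BOr B231 B312) m0 p (upI i a) (upI i b)) ↔
              Gp (BOr B231 B312) m0 p a b := by
            simp only [Gp, BOr, B231, B312, upI]; split_ifs <;> omega
          simp only [Rn] at this ⊢
          tauto
        have e3 : ∀ p, p < m0 → Rs (m-1) (fun a b => Rn (BOr B231 B312) m R i a b ∨ Gp (BOr B231 B312) m0 p a b) =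
            fun a b => Rs (m-1) (Rn (BOr B231 B312) m R i) a b ∨ Gp (BOr B231 B312) m0 p a b := by
          intro p hp; funext a b; apply propext; simp only [Rs, Gp]
          constructor
          · tauto
          · rintro (⟨ha, hb, hc⟩ | ⟨ha, hb, hc⟩)
            · tauto
            · exact ⟨by omega, by omega, Or.inr ⟨ha, hb, hc⟩⟩
        rw [← ih (m-1) m0 (Rn (BOr B231 B312) m R i) h1 (by omega),
          ← ih (m-1+1) m0 _ h1 (by omega), ← Finset.sum_add_distrib]
        apply Finset.sum_congr rfl
        intro p hp
        rw [Finset.mem_range] at hp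
        rw [if_neg, hn p hp, e3 p hp]
        rintro ⟨b, hb, hr | hr⟩
        · exact hblk ⟨b, hb, hr⟩
        · exact him hr.2.1

theorem starG : StarP (BOr B231 B312) := by
  intro N m m0 h1 h2
  rw [Finset.sum_range_succ]
  have e1 := cnt_G_aux N m m0 (fun _ _ => False) h1 h2
  simp only [false_or] at e1
  have e2 : Gp (BOr B231 B312) m0 m0 = fun _ _ => False := by
    funext a b
    apply propext
    rw [iff_false]
    simp only [Gp, BOr, B231, B312, upI]; split_ifs <;> omega
  rw [e2]
  have : ∀ p, (fun a b => Gp (BOr B231 B312) m0 p a b) = Gp (BOr B231 B312) m0 p := fun _ => rfl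
  simp only [this] at e1
  omega


def CmpA (n s t m : ℕ) (l : ℕ → ℕ) (A : Finset (ℕ × ℕ)) : Prop :=
  (∀ x y, (x, y) ∈ A → x < y ∧ t ≤ y ∧ y ≤ n ∧ (s ≤ x ∨ ∃ a < m, l a = x)) ∧
  (∀ x y y', (x, y) ∈ A → (x, y') ∈ A → y = y') ∧
  (∀ x x' y, (x, y) ∈ A → (x', y) ∈ A → x = x') ∧
  (∀ a < m, ∃ y, (l a, y) ∈ A)

def AvA (Bad : ℕ → ℕ → ℕ → Prop) (A : Finset (ℕ × ℕ)) : Prop :=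
  ∀ x y z c d e, (x, c) ∈ A → (y, d) ∈ A → (z, e) ∈ A → c < d → d < e → y < c → z < c → ¬ Bad x y z

def RspA (m : ℕ) (l : ℕ → ℕ) (R : ℕ → ℕ → Prop) (A : Finset (ℕ × ℕ)) : Prop :=
  ∀ a b, a < m → b < m → R a b → ∀ c d, (l a, c) ∈ A → (l b, d) ∈ A → c < d

open Classical in
noncomputable def Xs (Bad : ℕ → ℕ → ℕ → Prop) (n s t m : ℕ) (l : ℕ → ℕ) (R : ℕ → ℕ → Prop) :
    Finset (Finset (ℕ × ℕ)) :=
  ((Finset.range (n+1)) ×ˢ (Finset.range (n+1))).powerset.filter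
    fun A => CmpA n s t m l A ∧ AvA Bad A ∧ RspA m l R A

theorem mem_Xs (Bad : ℕ → ℕ → ℕ → Prop) (n s t m : ℕ) (l : ℕ → ℕ) (R : ℕ → ℕ → Prop)
    (A : Finset (ℕ × ℕ)) :
    A ∈ Xs Bad n s t m l R ↔ CmpA n s t m l A ∧ AvA Bad A ∧ RspA m l R A := by
  simp only [Xs, Finset.mem_filter, Finset.mem_powerset]
  constructor
  · exact fun h => h.2
  · intro h
    refine ⟨?_, h⟩
    rintro ⟨x, y⟩ hxy
    have := h.1.1 x y hxy
    simp only [Finset.mem_product, Finset.mem_range]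
    omega

def extL (l : ℕ → ℕ) (m k a : ℕ) : ℕ := if a < m then l a else k

theorem Xs_open (Bad : ℕ → ℕ → ℕ → Prop) (n k m : ℕ) (l : ℕ → ℕ) (R : ℕ → ℕ → Prop)
    (hl : ∀ a < m, l a < k) :
    (Xs Bad n k (k+1) m l R).card = (Xs Bad n (k+1) (k+1) m l R).card +
      (Xs Bad n (k+1) (k+1) (m+1) (extL l m k) (Rs m R)).card := by
  rw [← Finset.card_union_of_disjoint]
  · congr 1
    ext A
    rw [Finset.mem_union, mem_Xs, mem_Xs, mem_Xs]
    have hr : RspA (m+1) (extL l m k) (Rs m R) A ↔ RspA m l R A := by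
      constructor
      · intro h a b ha hb hr c d h1 h2
        refine h a b (by omega) (by omega) ⟨ha, hb, hr⟩ c d ?_ ?_
        · simpa [extL, ha] using h1
        · simpa [extL, hb] using h2
      · rintro h a b - - ⟨ha, hb, hr⟩ c d h1 h2
        simp only [extL, ha, hb, if_true] at h1 h2
        exact h a b ha hb hr c d h1 h2
    rw [hr]
    have hc : CmpA n k (k+1) m l A ↔ CmpA n (k+1) (k+1) m l A ∨
        CmpA n (k+1) (k+1) (m+1) (extL l m k) A := by
      constructor
      · rintro ⟨h1, h2, h3, h4⟩
        by_cases hk : ∃ y, (k, y) ∈ A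
        · right
          refine ⟨?_, h2, h3, ?_⟩
          · intro x y hxy
            obtain ⟨a1, a2, a3, a4⟩ := h1 x y hxy
            refine ⟨a1, a2, a3, ?_⟩
            rcases a4 with a4 | ⟨a, ha, rfl⟩
            · by_cases hxk : x = k
              · right; exact ⟨m, by omega, by simp [extL, hxk]⟩
              · left; omega
            · right; exact ⟨a, by omega, by simp [extL, ha]⟩
          · intro a ha
            by_cases ham : a < m
            · simp only [extL, ham, if_true]; exact h4 a ham
            · simp only [extL, ham, if_false]; exact hk
        · left
          refine ⟨?_, h2, h3, h4⟩
          intro x y hxy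
          obtain ⟨a1, a2, a3, a4⟩ := h1 x y hxy
          refine ⟨a1, a2, a3, ?_⟩
          rcases a4 with a4 | a4
          · left
            have : x ≠ k := by rintro rfl; exact hk ⟨y, hxy⟩
            omega
          · exact Or.inr a4
      · rintro (⟨h1, h2, h3, h4⟩ | ⟨h1, h2, h3, h4⟩)
        · refine ⟨?_, h2, h3, h4⟩
          intro x y hxy
          obtain ⟨a1, a2, a3, a4⟩ := h1 x y hxy
          refine ⟨a1, a2, a3, ?_⟩
          rcases a4 with a4 | a4
          · left; omega
          · exact Or.inr a4
        · refine ⟨?_, h2, h3, ?_⟩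
          · intro x y hxy
            obtain ⟨a1, a2, a3, a4⟩ := h1 x y hxy
            refine ⟨a1, a2, a3, ?_⟩
            rcases a4 with a4 | ⟨a, ha, rfl⟩
            · left; omega
            · by_cases ham : a < m
              · right; exact ⟨a, ham, by simp [extL, ham]⟩
              · left; simp [extL, ham]
          · intro a ha
            have := h4 a (by omega)
            simpa only [extL, ha, if_true] using this
    rw [hc]; tauto
  · rw [Finset.disjoint_left]
    intro A h1 h2
    rw [mem_Xs] at h1 h2
    obtain ⟨y, hy⟩ := h2.1.2.2.2 m (by omega)
    simp only [extL, lt_irrefl, if_false] at hy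
    rcases (h1.1.1 _ _ hy).2.2.2 with h | ⟨a, ha, h⟩
    · omega
    · have := hl a ha; omega

theorem upI_ne (i a : ℕ) : upI i a ≠ i := by unfold upI; split_ifs <;> omega

theorem upI_lt (i a m : ℕ) (hi : i < m) (h : a < m - 1) : upI i a < m := by
  unfold upI; split_ifs <;> omega

theorem upI_inj (i a b : ℕ) (h : upI i a = upI i b) : a = b := by
  unfold upI at h; split_ifs at h <;> omega

theorem upI_surj (i a m : ℕ) (h : a ≠ i) (hi : i < m) (ha : a < m) :
    ∃ a', a' < m - 1 ∧ upI i a' = a := by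
  refine ⟨if a < i then a else a - 1, ?_, ?_⟩
  · split_ifs <;> omega
  · unfold upI; split_ifs <;> omega

structure BadOK (Bad : ℕ → ℕ → ℕ → Prop) : Prop where
  inv : ∀ (l : ℕ → ℕ) (m : ℕ), (∀ a b, a < b → b < m → l a < l b) → ∀ i j k, i < m → j < m → k < m →
    (Bad (l i) (l j) (l k) ↔ Bad i j k)
  irr : ∀ x y, ¬ Bad x y y

open Classical in
theorem Xs_close (Bad : ℕ → ℕ → ℕ → Prop) (hB : BadOK Bad) (n k m : ℕ) (l : ℕ → ℕ)
    (R : ℕ → ℕ → Prop) (hk : k ≤ n)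
    (hl : ∀ a < m, l a < k) (hm : ∀ a b, a < b → b < m → l a < l b) :
    (Xs Bad n k k m l R).card = (Xs Bad n k (k+1) m l R).card +
      ∑ i ∈ Finset.range m, if ∃ b < m, R b i then 0 else
        (Xs Bad n k (k+1) (m-1) (fun a => l (upI i a)) (Rn Bad m R i)).card := by
  have linj : ∀ a b, a < m → b < m → l a = l b → a = b := by
    intro a b ha hb h
    rcases lt_trichotomy a b with h' | h' | h'
    · have := hm a b h' hb; omega
    · exact h'
    · have := hm b a h' ha; omega
  have key : Xs Bad n k k m l R = Xs Bad n k (k+1) m l R ∪ (Finset.range m).biUnion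
      (fun i => if ∃ b < m, R b i then ∅ else
        (Xs Bad n k (k+1) (m-1) (fun a => l (upI i a)) (Rn Bad m R i)).image
          (fun A => insert (l i, k) A)) := by
    ext A
    rw [Finset.mem_union, Finset.mem_biUnion, mem_Xs, mem_Xs]
    constructor
    · rintro ⟨⟨h1, h2, h3, h4⟩, hav, hrs⟩
      by_cases hx : ∃ x, (x, k) ∈ A
      · right
        obtain ⟨x, hx⟩ := hx
        obtain ⟨i, hi, rfl⟩ : ∃ a < m, l a = x := by
          rcases (h1 _ _ hx).2.2.2 with h | h
          · have := (h1 _ _ hx).1; omega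
          · exact h
        refine ⟨i, Finset.mem_range.2 hi, ?_⟩
        rw [if_neg]
        · rw [Finset.mem_image]
          refine ⟨A.erase (l i, k), ?_, Finset.insert_erase hx⟩
          rw [mem_Xs]
          refine ⟨⟨?_, ?_, ?_, ?_⟩, ?_, ?_⟩
          · intro x y hxy
            rw [Finset.mem_erase] at hxy
            obtain ⟨a1, a2, a3, a4⟩ := h1 x y hxy.2
            have hyk : y ≠ k := by
              rintro rfl
              exact hxy.1 (by rw [h3 _ _ _ hxy.2 hx])
            refine ⟨a1, by omega, a3, ?_⟩
            rcases a4 with a4 | ⟨a, ha, rfl⟩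
            · exact Or.inl a4
            · right
              have hai : a ≠ i := by
                rintro rfl
                exact hyk (h2 _ _ _ hxy.2 hx)
              obtain ⟨a', ha', rfl⟩ := upI_surj i a m hai hi ha
              exact ⟨a', ha', rfl⟩
          · intro x y y' u v
            exact h2 x y y' (Finset.mem_of_mem_erase u) (Finset.mem_of_mem_erase v)
          · intro x y y' u v
            exact h3 x y y' (Finset.mem_of_mem_erase u) (Finset.mem_of_mem_erase v)
          · intro a ha
            obtain ⟨y, hy⟩ := h4 (upI i a) (upI_lt i a m hi ha)
            refine ⟨y, Finset.mem_erase.2 ⟨?_, hy⟩⟩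
            intro h
            rw [Prod.mk.injEq] at h
            exact upI_ne i a (linj _ _ (upI_lt i a m hi ha) hi h.1)
          · intro x y z c d e u v w
            exact hav x y z c d e (Finset.mem_of_mem_erase u) (Finset.mem_of_mem_erase v)
              (Finset.mem_of_mem_erase w)
          · rintro a b - - ⟨ha, hb, hr⟩ c d u v
            have hua := upI_lt i a m hi ha
            have hub := upI_lt i b m hi hb
            have u' := Finset.mem_of_mem_erase u
            have v' := Finset.mem_of_mem_erase v
            have hd : d ≠ k := by
              rintro rfl
              exact upI_ne i b (linj _ _ hub hi (h3 _ _ _ v' hx))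
            rcases hr with hr | hr
            · exact hrs _ _ hua hub hr c d u' v'
            · by_contra hcd
              have hne : c ≠ d := by
                rintro rfl
                have := upI_inj i a b (linj _ _ hua hub (h3 _ _ _ u' v'))
                subst this
                exact hB.irr _ _ hr
              refine hav (l i) (l (upI i b)) (l (upI i a)) k d c hx v' u' ?_ (by omega)
                (hl _ hub) (hl _ hua) ((hB.inv l m hm _ _ _ hi hub hua).2 hr)
              have := (h1 _ _ v').2.1
              omega
        · rintro ⟨b, hb, hr⟩
          obtain ⟨c, hc⟩ := h4 b hb
          have := hrs b i hb hi hr c k hc hx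
          have := (h1 _ _ hc).2.1
          omega
      · left
        refine ⟨⟨?_, h2, h3, h4⟩, hav, hrs⟩
        intro x y hxy
        obtain ⟨a1, a2, a3, a4⟩ := h1 x y hxy
        have : y ≠ k := by rintro rfl; exact hx ⟨x, hxy⟩
        exact ⟨a1, by omega, a3, a4⟩
    · rintro (⟨⟨h1, h2, h3, h4⟩, hav, hrs⟩ | ⟨i, hi, hA⟩)
      · refine ⟨⟨?_, h2, h3, h4⟩, hav, hrs⟩
        intro x y hxy
        obtain ⟨a1, a2, a3, a4⟩ := h1 x y hxy
        exact ⟨a1, by omega, a3, a4⟩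
      · rw [Finset.mem_range] at hi
        split_ifs at hA with hbl
        · simp at hA
        rw [Finset.mem_image] at hA
        obtain ⟨A', hA', rfl⟩ := hA
        rw [mem_Xs] at hA'
        obtain ⟨⟨h1, h2, h3, h4⟩, hav, hrs⟩ := hA'
        have hnk : ∀ x, (x, k) ∉ A' := by
          intro x hx
          have := (h1 _ _ hx).2.1
          omega
        have hni : ∀ y, (l i, y) ∉ A' := by
          intro y hy
          rcases (h1 _ _ hy).2.2.2 with h | ⟨a, ha, h⟩
          · have := hl i hi; omega
          · exact upI_ne i a (linj _ _ (upI_lt i a m hi ha) hi h)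
        have hmem : ∀ x y, (x, y) ∈ insert (l i, k) A' ↔ (x = l i ∧ y = k) ∨ (x, y) ∈ A' := by
          intro x y
          rw [Finset.mem_insert, Prod.mk.injEq]
        refine ⟨⟨?_, ?_, ?_, ?_⟩, ?_, ?_⟩
        · intro x y hxy
          rw [hmem] at hxy
          rcases hxy with ⟨rfl, rfl⟩ | hxy
          · exact ⟨hl i hi, le_rfl, hk, Or.inr ⟨i, hi, rfl⟩⟩
          · obtain ⟨a1, a2, a3, a4⟩ := h1 x y hxy
            refine ⟨a1, by omega, a3, ?_⟩
            rcases a4 with a4 | ⟨a, ha, rfl⟩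
            · exact Or.inl a4
            · exact Or.inr ⟨_, upI_lt i a m hi ha, rfl⟩
        · intro x y y' u v
          rw [hmem] at u v
          rcases u with ⟨rfl, rfl⟩ | u
          · rcases v with ⟨_, rfl⟩ | v
            · rfl
            · exact absurd v (hni _)
          · rcases v with ⟨rfl, rfl⟩ | v
            · exact absurd u (hni _)
            · exact h2 _ _ _ u v
        · intro x x' y u v
          rw [hmem] at u v
          rcases u with ⟨rfl, rfl⟩ | u
          · rcases v with ⟨rfl, _⟩ | v
            · rfl
            · exact absurd v (hnk _)
          · rcases v with ⟨rfl, rfl⟩ | v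
            · exact absurd u (hnk _)
            · exact h3 _ _ _ u v
        · intro a ha
          by_cases hai : a = i
          · subst hai; exact ⟨k, Finset.mem_insert_self _ _⟩
          · obtain ⟨a', ha', rfl⟩ := upI_surj i a m hai hi ha
            obtain ⟨y, hy⟩ := h4 a' ha'
            exact ⟨y, Finset.mem_insert_of_mem hy⟩
        · intro x y z c d e u v w hcd hde hyc hzc hbad
          rw [hmem] at u v w
          have hkc : k ≤ c := by
            rcases u with ⟨rfl, rfl⟩ | u
            · exact le_rfl
            · have := (h1 _ _ u).2.1; omega
          have v' : (y, d) ∈ A' := by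
            rcases v with ⟨_, rfl⟩ | v
            · omega
            · exact v
          have w' : (z, e) ∈ A' := by
            rcases w with ⟨_, rfl⟩ | w
            · omega
            · exact w
          rcases u with ⟨rfl, rfl⟩ | u
          · rcases (h1 _ _ v').2.2.2 with h | ⟨a, ha, rfl⟩
            · omega
            rcases (h1 _ _ w').2.2.2 with h | ⟨b, hb, rfl⟩
            · omega
            have hua := upI_lt i a m hi ha
            have hub := upI_lt i b m hi hb
            have := hrs b a hb ha ⟨hb, ha, Or.inr ((hB.inv l m hm _ _ _ hi hua hub).1 hbad)⟩ e d w' v'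
            omega
          · exact hav x y z c d e u v' w' hcd hde hyc hzc hbad
        · intro a b ha hb hr c d u v
          have hbi : b ≠ i := by rintro rfl; exact hbl ⟨a, ha, hr⟩
          rw [hmem] at u v
          have v' : (l b, d) ∈ A' := by
            rcases v with ⟨h, _⟩ | v
            · exact absurd (linj _ _ hb hi h) hbi
            · exact v
          rcases u with ⟨h, rfl⟩ | u
          · have := (h1 _ _ v').2.1; omega
          · have hai : a ≠ i := by rintro rfl; exact hni _ u
            obtain ⟨a', ha', rfl⟩ := upI_surj i a m hai hi ha
            obtain ⟨b', hb', rfl⟩ := upI_surj i b m hbi hi hb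
            exact hrs a' b' ha' hb' ⟨ha', hb', Or.inl hr⟩ c d u v'
  have hmemk : ∀ i, ∀ A, A ∈ (if ∃ b < m, R b i then ∅ else
        (Xs Bad n k (k+1) (m-1) (fun a => l (upI i a)) (Rn Bad m R i)).image
          (fun A => insert (l i, k) A)) → (l i, k) ∈ A := by
    intro i A hA
    split_ifs at hA
    · simp at hA
    · rw [Finset.mem_image] at hA
      obtain ⟨A', _, rfl⟩ := hA
      exact Finset.mem_insert_self _ _
  rw [key, Finset.card_union_of_disjoint, Finset.card_biUnion]
  · congr 1
    apply Finset.sum_congr rfl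
    intro i hi
    split_ifs
    · simp
    · apply Finset.card_image_of_injOn
      intro A hA A' hA' h
      rw [Finset.mem_coe, mem_Xs] at hA hA'
      have n1 : (l i, k) ∉ A := fun h => by have := (hA.1.1 _ _ h).2.1; omega
      have n2 : (l i, k) ∉ A' := fun h => by have := (hA'.1.1 _ _ h).2.1; omega
      have := congrArg (fun s => Finset.erase s (l i, k)) h
      simpa [Finset.erase_insert n1, Finset.erase_insert n2] using this
  · intro i hi j hj hij
    have hi' := Finset.mem_range.1 hi
    have hj' := Finset.mem_range.1 hj
    rw [Function.onFun, Finset.disjoint_left]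
    intro A hA hA'
    have e1 := hmemk i A hA
    have e2 := hmemk j A hA'
    have hAX : A ∈ Xs Bad n k k m l R := by
      rw [key, Finset.mem_union, Finset.mem_biUnion]
      exact Or.inr ⟨i, hi, hA⟩
    rw [mem_Xs] at hAX
    exact hij (linj _ _ hi' hj' (hAX.1.2.2.1 _ _ _ e1 e2))
  · rw [Finset.disjoint_left]
    intro A hA hA'
    rw [Finset.mem_biUnion] at hA'
    obtain ⟨i, _, hA'⟩ := hA'
    have e1 := hmemk i A hA'
    rw [mem_Xs] at hA
    have := (hA.1.1 _ _ e1).2.1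
    omega

theorem Xs_card (Bad : ℕ → ℕ → ℕ → Prop) (hB : BadOK Bad) (n N : ℕ) :
    ∀ (k m : ℕ) (l : ℕ → ℕ) (R : ℕ → ℕ → Prop), k + N = n + 1 →
    (∀ a < m, l a < k) → (∀ a b, a < b → b < m → l a < l b) →
    (Xs Bad n k k m l R).card = cnt Bad N m R := by
  induction N with
  | zero =>
    intro k m l R hk hl hm
    simp only [cnt]
    split_ifs with h
    · subst h
      rw [Finset.card_eq_one]
      refine ⟨∅, ?_⟩
      ext A
      rw [mem_Xs, Finset.mem_singleton]
      constructor
      · intro h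
        rw [Finset.eq_empty_iff_forall_notMem]
        rintro ⟨x, y⟩ hxy
        have := h.1.1 _ _ hxy
        omega
      · rintro rfl
        simp [CmpA, AvA, RspA]
    · rw [Finset.card_eq_zero, Finset.eq_empty_iff_forall_notMem]
      intro A hA
      rw [mem_Xs] at hA
      obtain ⟨y, hy⟩ := hA.1.2.2.2 0 (by omega)
      have := hA.1.1 _ _ hy
      omega
  | succ N ih =>
    intro k m l R hk hl hm
    have hext : ∀ (m : ℕ) (l : ℕ → ℕ), (∀ a < m, l a < k) → (∀ a b, a < b → b < m → l a < l b) →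
        (∀ a < m+1, extL l m k a < k+1) ∧ (∀ a b, a < b → b < m+1 → extL l m k a < extL l m k b) := by
      intro m l hl hm
      constructor
      · intro a ha
        unfold extL
        split_ifs with h
        · have := hl a h; omega
        · omega
      · intro a b hab hb
        unfold extL
        rw [if_pos (by omega)]
        split_ifs with h
        · exact hm a b hab h
        · exact hl a (by omega)
    have hop : ∀ (m : ℕ) (l : ℕ → ℕ) (R : ℕ → ℕ → Prop), (∀ a < m, l a < k) →
        (∀ a b, a < b → b < m → l a < l b) →
        (Xs Bad n k (k+1) m l R).card = cnt Bad N m R + cnt Bad N (m+1) (Rs m R) := by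
      intro m l R hl hm
      rw [Xs_open Bad n k m l R hl, ih (k+1) m l R (by omega) (fun a ha => by have := hl a ha; omega) hm,
        ih (k+1) (m+1) _ _ (by omega) (hext m l hl hm).1 (hext m l hl hm).2]
    rw [Xs_close Bad hB n k m l R (by omega) hl hm, hop m l R hl hm]
    simp only [cnt]
    congr 1
    apply Finset.sum_congr rfl
    intro i hi
    rw [Finset.mem_range] at hi
    split_ifs
    · rfl
    · apply hop
      · intro a ha; exact hl _ (upI_lt i a m hi ha)
      · intro a b hab hb
        apply hm _ _ _ (upI_lt i b m hi hb)
        unfold upI; split_ifs <;> omega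


open Classical in
noncomputable def arcsOf {n : ℕ} (P : Finpartition (Finset.Icc 1 n)) : Finset (ℕ × ℕ) :=
  ((Finset.range (n+1)) ×ˢ (Finset.range (n+1))).filter fun p => PartArc P p.1 p.2

theorem mem_arcsOf {n : ℕ} (P : Finpartition (Finset.Icc 1 n)) (x y : ℕ) :
    (x, y) ∈ arcsOf P ↔ PartArc P x y := by
  simp only [arcsOf, Finset.mem_filter, Finset.mem_product, Finset.mem_range]
  constructor
  · exact fun h => h.2
  · intro h
    refine ⟨?_, h⟩
    obtain ⟨h1, B, hB, hx, hy, -⟩ := h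
    have hx' := P.le hB hx
    have hy' := P.le hB hy
    rw [Finset.mem_Icc] at hx' hy'
    omega

theorem arcsOf_cmp {n : ℕ} (P : Finpartition (Finset.Icc 1 n)) (l : ℕ → ℕ) :
    CmpA n 1 1 0 l (arcsOf P) := by
  refine ⟨?_, ?_, ?_, ?_⟩
  · intro x y h
    rw [mem_arcsOf] at h
    obtain ⟨h1, B, hB, hx, hy, -⟩ := h
    have hx' := P.le hB hx
    have hy' := P.le hB hy
    rw [Finset.mem_Icc] at hx' hy'
    omega
  · intro x y y' h h'
    rw [mem_arcsOf] at h h'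
    obtain ⟨h1, B, hB, hx, hy, hn⟩ := h
    obtain ⟨h1', B', hB', hx', hy', hn'⟩ := h'
    obtain rfl := P.eq_of_mem_parts hB hB' hx hx'
    have a1 := hn y' hy'
    have a2 := hn' y hy
    omega
  · intro x x' y h h'
    rw [mem_arcsOf] at h h'
    obtain ⟨h1, B, hB, hx, hy, hn⟩ := h
    obtain ⟨h1', B', hB', hx', hy', hn'⟩ := h'
    obtain rfl := P.eq_of_mem_parts hB hB' hy hy'
    have a1 := hn x' hx'
    have a2 := hn' x hx
    omega
  · intro a ha; omega

open Classical in
noncomputable def rootA (A : Finset (ℕ × ℕ)) (y : ℕ) : ℕ :=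
  if h : ∃ x, x < y ∧ (x, y) ∈ A then rootA A h.choose else y
termination_by y
decreasing_by exact h.choose_spec.1

theorem rootA_none (A : Finset (ℕ × ℕ)) (y : ℕ) (h : ¬ ∃ x, x < y ∧ (x, y) ∈ A) : rootA A y = y := by
  rw [rootA, dif_neg h]

theorem rootA_some (A : Finset (ℕ × ℕ)) (n : ℕ) (l : ℕ → ℕ) (hA : CmpA n 1 1 0 l A) (x y : ℕ)
    (h : (x, y) ∈ A) : rootA A y = rootA A x := by
  have hex : ∃ x, x < y ∧ (x, y) ∈ A := ⟨x, (hA.1 _ _ h).1, h⟩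
  rw [rootA, dif_pos hex]
  rw [hA.2.2.1 _ _ _ hex.choose_spec.2 h]

theorem rootA_le (A : Finset (ℕ × ℕ)) (n : ℕ) (l : ℕ → ℕ) (hA : CmpA n 1 1 0 l A) (y : ℕ) :
    rootA A y ≤ y := by
  induction y using Nat.strong_induction_on with
  | _ y ih =>
    by_cases h : ∃ x, x < y ∧ (x, y) ∈ A
    · obtain ⟨x, hx, hxy⟩ := h
      rw [rootA_some A n l hA x y hxy]
      exact (ih x hx).trans hx.le
    · rw [rootA_none A y h]

theorem rootA_chain (A : Finset (ℕ × ℕ)) (n : ℕ) (l : ℕ → ℕ) (hA : CmpA n 1 1 0 l A) (y : ℕ) :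
    ∀ x, x < y → rootA A x = rootA A y →
      (∃ i, (i, y) ∈ A ∧ x ≤ i) ∧ (∃ s, (x, s) ∈ A ∧ s ≤ y) := by
  induction y using Nat.strong_induction_on with
  | _ y ih =>
    intro x hxy hr
    by_cases h : ∃ x, x < y ∧ (x, y) ∈ A
    · obtain ⟨i, hi, hiy⟩ := h
      have hri := rootA_some A n l hA i y hiy
      rcases lt_trichotomy x i with h | h | h
      · refine ⟨⟨i, hiy, h.le⟩, ?_⟩
        obtain ⟨s, hs, hs'⟩ := (ih i hi x h (hr.trans hri)).2
        exact ⟨s, hs, by omega⟩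
      · subst h
        exact ⟨⟨x, hiy, le_rfl⟩, ⟨y, hiy, le_rfl⟩⟩
      · exfalso
        obtain ⟨s, hs, hs'⟩ := (ih x hxy i h (hri.symm.trans hr.symm)).2
        have := hA.2.1 _ _ _ hs hiy
        omega
    · exfalso
      rw [rootA_none A y h] at hr
      have := rootA_le A n l hA x
      omega

theorem part_root {n : ℕ} (P : Finpartition (Finset.Icc 1 n)) (x y : ℕ)
    (hx : x ∈ Finset.Icc 1 n) (hy : y ∈ Finset.Icc 1 n) :
    P.part x = P.part y ↔ rootA (arcsOf P) x = rootA (arcsOf P) y := by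
  have hA := arcsOf_cmp P id
  have h1 : ∀ x, P.part (rootA (arcsOf P) x) = P.part x := by
    intro x
    induction x using Nat.strong_induction_on with
    | _ x ih =>
      by_cases h : ∃ i, i < x ∧ (i, x) ∈ arcsOf P
      · obtain ⟨i, hi, hix⟩ := h
        rw [rootA_some _ n id hA i x hix, ih i hi]
        rw [mem_arcsOf] at hix
        obtain ⟨_, B, hB, h1, h2, -⟩ := hix
        rw [P.part_eq_of_mem hB h1, P.part_eq_of_mem hB h2]
      · rw [rootA_none _ x h]
  have h2 : ∀ y ∈ Finset.Icc 1 n, ∀ x ∈ Finset.Icc 1 n, x ≤ y → P.part x = P.part y →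
      rootA (arcsOf P) x = rootA (arcsOf P) y := by
    intro y
    induction y using Nat.strong_induction_on with
    | _ y ih =>
      intro hy x hx hxy hp
      rcases hxy.eq_or_lt with rfl | hlt
      · rfl
      have hne : ((P.part y).filter (· < y)).Nonempty :=
        ⟨x, Finset.mem_filter.2 ⟨by rw [← hp]; exact P.mem_part hx, hlt⟩⟩
      have hmax := Finset.max'_mem _ hne
      set i := Finset.max' _ hne with hi
      rw [Finset.mem_filter] at hmax
      have hxi : x ≤ i := Finset.le_max' ((P.part y).filter (· < y)) x
        (Finset.mem_filter.2 ⟨by rw [← hp]; exact P.mem_part hx, hlt⟩)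
      have hyP : P.part y ∈ P.parts := P.part_mem.2 hy
      have hiI : i ∈ Finset.Icc 1 n := P.le hyP hmax.1
      have harc : (i, y) ∈ arcsOf P := by
        rw [mem_arcsOf]
        refine ⟨hmax.2, P.part y, hyP, hmax.1, P.mem_part hy, ?_⟩
        rintro z hz ⟨h3, h4⟩
        have := Finset.le_max' ((P.part y).filter (· < y)) z (Finset.mem_filter.2 ⟨hz, h4⟩)
        omega
      rw [rootA_some _ n id hA i y harc]
      exact ih i hmax.2 hiI x hx hxi (hp.trans (P.part_eq_of_mem hyP hmax.1).symm)
  constructor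
  · intro h
    rcases le_total x y with h' | h'
    · exact h2 y hy x hx h' h
    · exact (h2 x hx y hy h' h.symm).symm
  · intro h
    rw [← h1 x, ← h1 y, h]

theorem arcsOf_inj {n : ℕ} : Function.Injective (arcsOf (n := n)) := by
  have key : ∀ P Q : Finpartition (Finset.Icc 1 n), arcsOf P = arcsOf Q → P.parts ⊆ Q.parts := by
    intro P Q h B hB
    obtain ⟨x, hx⟩ := P.nonempty_of_mem_parts hB
    have hxI := P.le hB hx
    have : B = Q.part x := by
      rw [← P.part_eq_of_mem hB hx]
      ext y
      by_cases hy : y ∈ Finset.Icc 1 n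
      · rw [P.mem_part_iff_part_eq_part hy hxI, Q.mem_part_iff_part_eq_part hy hxI,
          part_root P y x hy hxI, part_root Q y x hy hxI, h]
      · constructor
        · intro h'; exact absurd (P.le (P.part_mem.2 hxI) h') hy
        · intro h'; exact absurd (Q.le (Q.part_mem.2 hxI) h') hy
    rw [this]
    exact Q.part_mem.2 hxI
  intro P Q h
  ext1
  exact Finset.Subset.antisymm (key P Q h) (key Q P h.symm)

theorem arcsOf_surj {n : ℕ} (l : ℕ → ℕ) (A : Finset (ℕ × ℕ)) (hA : CmpA n 1 1 0 l A) :
    ∃ P : Finpartition (Finset.Icc 1 n), arcsOf P = A := by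
  classical
  let blk : ℕ → Finset ℕ := fun x => (Finset.Icc 1 n).filter fun y => rootA A y = rootA A x
  have hblk : ∀ x y, y ∈ blk x ↔ y ∈ Finset.Icc 1 n ∧ rootA A y = rootA A x := by
    intro x y; simp only [blk, Finset.mem_filter]
  let P : Finpartition (Finset.Icc 1 n) := Finpartition.ofExistsUnique
    ((Finset.Icc 1 n).image blk)
    (by
      intro p hp
      obtain ⟨x, hx, rfl⟩ := Finset.mem_image.1 hp
      exact Finset.filter_subset _ _)
    (by
      intro a ha
      refine ⟨blk a, ⟨Finset.mem_image_of_mem _ ha, (hblk _ _).2 ⟨ha, rfl⟩⟩, ?_⟩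
      rintro t ⟨ht, hat⟩
      obtain ⟨x, hx, rfl⟩ := Finset.mem_image.1 ht
      rw [hblk] at hat
      ext y
      rw [hblk, hblk, hat.2])
    (by
      intro h
      obtain ⟨x, hx, h⟩ := Finset.mem_image.1 h
      have : x ∈ blk x := (hblk _ _).2 ⟨hx, rfl⟩
      rw [h] at this
      simp at this)
  have hP : P.parts = (Finset.Icc 1 n).image blk := rfl
  refine ⟨P, ?_⟩
  ext ⟨i, j⟩
  rw [mem_arcsOf]
  constructor
  · rintro ⟨hij, B, hB, hi, hj, hn⟩
    rw [hP] at hB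
    obtain ⟨x, hx, rfl⟩ := Finset.mem_image.1 hB
    have hi' := (hblk _ _).1 hi
    have hj' := (hblk _ _).1 hj
    obtain ⟨i', hi'j, hle⟩ := (rootA_chain A n l hA j i hij (hi'.2.trans hj'.2.symm)).1
    have h1 := hA.1 _ _ hi'j
    have hI := Finset.mem_Icc.1 hi'.1
    have : i' ∈ blk x := (hblk _ _).2 ⟨Finset.mem_Icc.2 (by omega), by
      rw [← rootA_some A n l hA i' j hi'j, hj'.2]⟩
    have := hn i' this
    have : i = i' := by omega
    rw [this]; exact hi'j
  · intro hij
    have h1 := hA.1 _ _ hij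
    have hi : 1 ≤ i := by
      rcases h1.2.2.2 with h | ⟨a, ha, -⟩
      · exact h
      · omega
    have hjI : j ∈ Finset.Icc 1 n := Finset.mem_Icc.2 (by omega)
    have hiI : i ∈ Finset.Icc 1 n := Finset.mem_Icc.2 (by omega)
    refine ⟨h1.1, blk j, ?_, ?_, ?_, ?_⟩
    · rw [hP]; exact Finset.mem_image_of_mem _ hjI
    · exact (hblk _ _).2 ⟨hiI, (rootA_some A n l hA i j hij).symm⟩
    · exact (hblk _ _).2 ⟨hjI, rfl⟩
    · rintro x hx ⟨h2, h3⟩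
      rw [hblk] at hx
      obtain ⟨i', hi', hle⟩ := (rootA_chain A n l hA j x h3 hx.2).1
      have := hA.2.2.1 _ _ _ hi' hij
      omega

theorem contains_iff {n : ℕ} (τ : Equiv.Perm (Fin 3)) (P : Finpartition (Finset.Icc 1 n)) :
    PartContains τ P ↔ ∃ o1 o2 o3 c1 c2 c3 : ℕ, o1 < o2 ∧ o2 < o3 ∧ o3 < c1 ∧ c1 < c2 ∧ c2 < c3 ∧
      PartArc P o1 (![c3, c2, c1] (τ 0)) ∧ PartArc P o2 (![c3, c2, c1] (τ 1)) ∧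
      PartArc P o3 (![c3, c2, c1] (τ 2)) := by
  constructor
  · rintro ⟨f, hf, h⟩
    have key : ∀ t : Fin 3, f ⟨2 * 3 - 1 - t.1, by have := t.isLt; omega⟩ = ![f 5, f 4, f 3] t := by
      intro t; fin_cases t <;> rfl
    refine ⟨f 0, f 1, f 2, f 3, f 4, f 5, hf (by decide), hf (by decide), hf (by decide),
      hf (by decide), hf (by decide), ?_, ?_, ?_⟩
    · have := h 0; rw [key] at this; exact this
    · have := h 1; rw [key] at this; exact this
    · have := h 2; rw [key] at this; exact this
  · rintro ⟨o1, o2, o3, c1, c2, c3, h1, h2, h3, h4, h5, a1, a2, a3⟩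
    have key : ∀ t : Fin 3, (![o1, o2, o3, c1, c2, c3] : Fin 6 → ℕ)
        ⟨2 * 3 - 1 - t.1, by have := t.isLt; omega⟩ = ![c3, c2, c1] t := by
      intro t; fin_cases t <;> rfl
    refine ⟨(![o1, o2, o3, c1, c2, c3] : Fin 6 → ℕ), ?_, ?_⟩
    · show StrictMono (![o1, o2, o3, c1, c2, c3] : Fin 6 → ℕ)
      rw [Fin.strictMono_iff_lt_succ]
      intro i
      fin_cases i
      · exact h1
      · exact h2
      · exact h3
      · exact h4
      · exact h5
    · intro a
      rw [key]
      fin_cases a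
      · exact a1
      · exact a2
      · exact a3

def PatOK (τ : Equiv.Perm (Fin 3)) (B : ℕ → ℕ → ℕ → Prop) : Prop :=
  ∀ n (P : Finpartition (Finset.Icc 1 n)), PartAvoids τ P ↔ AvA B (arcsOf P)

theorem ok123 : PatOK p123 B123 := by
  intro n P
  rw [PartAvoids, contains_iff]
  simp only [AvA, mem_arcsOf, B123]
  constructor
  · rintro h x y z c d e a1 a2 a3 h1 h2 h3 h4 ⟨h5, h6⟩
    exact h ⟨z, y, x, c, d, e, h5, h6, a1.1, h1, h2, a3, a2, a1⟩
  · rintro h ⟨o1, o2, o3, c1, c2, c3, h1, h2, h3, h4, h5, a1, a2, a3⟩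
    exact h o3 o2 o1 c1 c2 c3 a3 a2 a1 h4 h5 (by omega) (by omega) ⟨h1, h2⟩

theorem ok132 : PatOK p132 B132 := by
  intro n P
  rw [PartAvoids, contains_iff]
  simp only [AvA, mem_arcsOf, B132]
  constructor
  · rintro h x y z c d e a1 a2 a3 h1 h2 h3 h4 ⟨h5, h6⟩
    exact h ⟨z, x, y, c, d, e, h5, h6, h3, h1, h2, a3, a1, a2⟩
  · rintro h ⟨o1, o2, o3, c1, c2, c3, h1, h2, h3, h4, h5, a1, a2, a3⟩
    exact h o2 o3 o1 c1 c2 c3 a2 a3 a1 h4 h5 (by omega) (by omega) ⟨h1, h2⟩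

theorem ok213 : PatOK p213 B213 := by
  intro n P
  rw [PartAvoids, contains_iff]
  simp only [AvA, mem_arcsOf, B213]
  constructor
  · rintro h x y z c d e a1 a2 a3 h1 h2 h3 h4 ⟨h5, h6⟩
    exact h ⟨y, z, x, c, d, e, h5, h6, a1.1, h1, h2, a2, a3, a1⟩
  · rintro h ⟨o1, o2, o3, c1, c2, c3, h1, h2, h3, h4, h5, a1, a2, a3⟩
    exact h o3 o1 o2 c1 c2 c3 a3 a1 a2 h4 h5 (by omega) (by omega) ⟨h1, h2⟩

theorem ok231 : PatOK p231 B231 := by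
  intro n P
  rw [PartAvoids, contains_iff]
  simp only [AvA, mem_arcsOf, B231]
  constructor
  · rintro h x y z c d e a1 a2 a3 h1 h2 h3 h4 ⟨h5, h6⟩
    exact h ⟨y, x, z, c, d, e, h5, h6, h4, h1, h2, a2, a1, a3⟩
  · rintro h ⟨o1, o2, o3, c1, c2, c3, h1, h2, h3, h4, h5, a1, a2, a3⟩
    exact h o2 o1 o3 c1 c2 c3 a2 a1 a3 h4 h5 (by omega) (by omega) ⟨h1, h2⟩

theorem ok312 : PatOK p312 B312 := by
  intro n P
  rw [PartAvoids, contains_iff]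
  simp only [AvA, mem_arcsOf, B312]
  constructor
  · rintro h x y z c d e a1 a2 a3 h1 h2 h3 h4 ⟨h5, h6⟩
    exact h ⟨x, z, y, c, d, e, h5, h6, h3, h1, h2, a1, a3, a2⟩
  · rintro h ⟨o1, o2, o3, c1, c2, c3, h1, h2, h3, h4, h5, a1, a2, a3⟩
    exact h o1 o3 o2 c1 c2 c3 a1 a3 a2 h4 h5 (by omega) (by omega) ⟨h1, h2⟩

theorem ok321 : PatOK p321 B321 := by
  intro n P
  rw [PartAvoids, contains_iff]
  simp only [AvA, mem_arcsOf, B321]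
  constructor
  · rintro h x y z c d e a1 a2 a3 h1 h2 h3 h4 ⟨h5, h6⟩
    exact h ⟨x, y, z, c, d, e, h5, h6, h4, h1, h2, a1, a2, a3⟩
  · rintro h ⟨o1, o2, o3, c1, c2, c3, h1, h2, h3, h4, h5, a1, a2, a3⟩
    exact h o1 o2 o3 c1 c2 c3 a1 a2 a3 h4 h5 (by omega) (by omega) ⟨h1, h2⟩

def bot2 : ℕ → ℕ → Prop := fun _ _ => False

theorem mem_Xs_init (B B' : ℕ → ℕ → ℕ → Prop) (n : ℕ) (A : Finset (ℕ × ℕ)) :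
    A ∈ Xs (BOr B B') n 1 1 0 id bot2 ↔ CmpA n 1 1 0 id A ∧ AvA B A ∧ AvA B' A := by
  rw [mem_Xs]
  have h1 : RspA 0 id bot2 A := by intro a b ha; omega
  have h2 : AvA (BOr B B') A ↔ AvA B A ∧ AvA B' A := by
    simp only [AvA, BOr, not_or]
    constructor
    · intro h
      exact ⟨fun x y z c d e a1 a2 a3 a4 a5 a6 a7 => (h x y z c d e a1 a2 a3 a4 a5 a6 a7).1,
        fun x y z c d e a1 a2 a3 a4 a5 a6 a7 => (h x y z c d e a1 a2 a3 a4 a5 a6 a7).2⟩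
    · rintro ⟨h, h'⟩ x y z c d e a1 a2 a3 a4 a5 a6 a7
      exact ⟨h x y z c d e a1 a2 a3 a4 a5 a6 a7, h' x y z c d e a1 a2 a3 a4 a5 a6 a7⟩
  tauto

theorem pcount2_eq (σ τ : Equiv.Perm (Fin 3)) (B B' : ℕ → ℕ → ℕ → Prop)
    (hσ : PatOK σ B) (hτ : PatOK τ B') (n : ℕ) :
    pcount2 σ τ n = (Xs (BOr B B') n 1 1 0 id bot2).card := by
  unfold pcount2
  rw [← Fintype.card_coe, ← Nat.card_eq_fintype_card]
  refine Nat.card_eq_of_bijective (fun P => ⟨arcsOf P.1, (mem_Xs_init _ _ _ _).2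
    ⟨arcsOf_cmp _ _, (hσ _ _).1 P.2.1, (hτ _ _).1 P.2.2⟩⟩) ⟨?_, ?_⟩
  · intro P Q h
    exact Subtype.ext (arcsOf_inj (congrArg Subtype.val h))
  · rintro ⟨A, hA⟩
    rw [mem_Xs_init] at hA
    obtain ⟨P, rfl⟩ := arcsOf_surj id A hA.1
    exact ⟨⟨P, (hσ _ _).2 hA.2.1, (hτ _ _).2 hA.2.2⟩, rfl⟩

open PowerSeries in
theorem gf_exists : ∃ y : PowerSeries ℚ, y = 2 * X + 3 * X * y + X * y ^ 2 := by
  -- via iterating: build coefficients by strong recursion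
  let f : ℕ → ℚ := fun n => WellFounded.fix (C := fun _ => ℚ) Nat.lt_wfRel.wf
    (fun n F => match n, F with
      | 0, _ => 0
      | (n+1), F => (if n = 0 then 2 else 0) + 3 * F n (Nat.lt_succ_self n) +
          ∑ i : Fin (n+1), F i.1 i.2 * F (n - i.1) (Nat.lt_succ_of_le (Nat.sub_le _ _))) n
  have f0 : f 0 = 0 := by
    simp only [f]; rw [WellFounded.fix_eq]
  have fs : ∀ n, f (n+1) = (if n = 0 then 2 else 0) + 3 * f n +
      ∑ i ∈ Finset.range (n+1), f i * f (n - i) := by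
    intro n
    conv_lhs => simp only [f]
    rw [WellFounded.fix_eq, Finset.sum_range]
  refine ⟨PowerSeries.mk f, ?_⟩
  ext n
  rw [mul_comm 2 X, mul_comm 3 X, mul_assoc, ← mul_add, ← mul_add]
  cases n with
  | zero => simp [f0]
  | succ n =>
    rw [PowerSeries.coeff_succ_X_mul, PowerSeries.coeff_mk, fs]
    rw [show (2 : PowerSeries ℚ) = C 2 from rfl, show (3 : PowerSeries ℚ) = C 3 from rfl]
    simp [sq, PowerSeries.coeff_mul, PowerSeries.coeff_C, Finset.Nat.sum_antidiagonal_eq_sum_range_succ_mk]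

open PowerSeries in
theorem gf_Wt : (2 * (1 - 3 * X + 3 * X ^ 2) * (PowerSeries.mk fun n => (Wt n 0 : ℚ)) -
        (2 - 3 * X + X ^ 2)) ^ 2 = X ^ 2 * (1 - 6 * X + X ^ 2) := by
  obtain ⟨y, hy⟩ := gf_exists
  have hy0 : constantCoeff y = 0 := by
    rw [hy]; simp
  set Q : PowerSeries ℚ := (1-X)*(1-2*X-X*y)-X^2 with hQ
  have hQ0 : constantCoeff Q ≠ 0 := by simp [hQ]
  have hQi : Q * Q⁻¹ = 1 := PowerSeries.mul_inv_cancel Q hQ0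
  set q := Q⁻¹
  let V : ℕ → PowerSeries ℚ := fun h => match h with
    | 0 => (1 - 2*X - X*y) * q
    | (h+1) => y ^ h * (X * q)
  have v0 : V 0 = 1 + X * (V 0 + V 1) := by
    simp only [V]; linear_combination hQi - q * hQ
  have v1 : V 1 = X * ((V 1 + V 2) + (V 0 + V 1)) := by
    simp only [V]; ring
  have v2 : ∀ h, V (h+2) = X * ((V (h+2) + V (h+3)) + C 2 * (V (h+1) + V (h+2))) := by
    intro h
    simp only [V]
    rw [show (C 2 : PowerSeries ℚ) = 2 from rfl]
    linear_combination (y ^ h * X * q) * hy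
  have key : ∀ N h, coeff N (V h) = (Wt N h : ℚ) := by
    intro N
    induction N with
    | zero =>
      intro h
      match h with
      | 0 => rw [v0]; simp [Wt]
      | 1 => rw [v1]; simp [Wt]
      | h+2 => rw [v2]; simp [Wt]
    | succ N ih =>
      intro h
      match h with
      | 0 =>
        rw [v0, map_add, coeff_succ_X_mul]
        simp [Wt, ih, PowerSeries.coeff_one]
      | 1 =>
        rw [v1, coeff_succ_X_mul]; simp [Wt, ih]
      | h+2 =>
        rw [v2, coeff_succ_X_mul]; simp [Wt, ih]
  have hB : (PowerSeries.mk fun n => (Wt n 0 : ℚ)) = V 0 := by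
    ext n; rw [coeff_mk]; exact (key n 0).symm
  rw [hB]
  have h1 : (1 - 3*X + 3*X^2) * V 0 = 1 - 2*X + 2*X^2 + X^2*y := by
    have h2 : (1 - 3*X + 3*X^2) * (1-2*X-X*y) = (1 - 2*X + 2*X^2 + X^2*y) * Q := by
      rw [hQ]
      linear_combination (-(X^2*(1-X)) : PowerSeries ℚ) * hy
    simp only [V]
    linear_combination q * h2 + (1 - 2*X + 2*X^2 + X^2*y) * hQi
  have h3 : 2 * (1 - 3 * X + 3 * X ^ 2) * V 0 - (2 - 3 * X + X ^ 2) = -X * (1 - 3*X - 2*X*y) := by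
    linear_combination 2 * h1
  rw [h3]
  linear_combination (-4*X^3) * hy

theorem BadOK_of (P : Prop → Prop → Prop → Prop → Prop → Prop → Prop) (h : ∀ x y : ℕ, ¬ P (x < y) (y < x) (x < y) (y < x) (y < y) (y < y)) :
    BadOK (fun x y z => P (x < y) (y < x) (x < z) (z < x) (y < z) (z < y)) := by
  constructor
  · intro l m hm i j k hi hj hk
    have key : ∀ a b, a < m → b < m → ((l a < l b) = (a < b)) := by
      intro a b ha hb
      apply propext
      constructor
      · intro h
        rcases lt_trichotomy a b with h' | h' | h'
        · exact h'
        · subst h'; omega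
        · have := hm b a h' ha; omega
      · exact fun h => hm a b h hb
    simp only [key i j hi hj, key j i hj hi, key i k hi hk, key k i hk hi, key j k hj hk, key k j hk hj]
  · exact h

theorem okA : BadOK (BOr B123 B213) :=
  BadOK_of (fun xy yx xz zx yz zy => (zy ∧ yx) ∨ (yz ∧ zx)) (by intros; omega)
theorem okB : BadOK (BOr B132 B213) :=
  BadOK_of (fun xy yx xz zx yz zy => (zx ∧ xy) ∨ (yz ∧ zx)) (by intros; omega)
theorem okC : BadOK (BOr B132 B231) :=
  BadOK_of (fun xy yx xz zx yz zy => (zx ∧ xy) ∨ (yx ∧ xz)) (by intros; omega)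
theorem okF : BadOK (BOr B213 B312) :=
  BadOK_of (fun xy yx xz zx yz zy => (yz ∧ zx) ∨ (xz ∧ zy)) (by intros; omega)
theorem okG : BadOK (BOr B231 B312) :=
  BadOK_of (fun xy yx xz zx yz zy => (yx ∧ xz) ∨ (xz ∧ zy)) (by intros; omega)
theorem okI : BadOK (BOr B312 B321) :=
  BadOK_of (fun xy yx xz zx yz zy => (xz ∧ zy) ∨ (xy ∧ yz)) (by intros; omega)

theorem Xs_Wt (Bad : ℕ → ℕ → ℕ → Prop) (hB : BadOK Bad) (hS : StarP Bad) (n : ℕ) :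
    (Xs Bad n 1 1 0 id bot2).card = Wt n 0 := by
  rw [Xs_card Bad hB n n 1 0 id bot2 (by omega) (by intros; omega) (by intros; omega)]
  exact cnt_eq_Wt Bad hS n 0

def revA (n : ℕ) (A : Finset (ℕ × ℕ)) : Finset (ℕ × ℕ) :=
  A.image (fun p => (n+1-p.2, n+1-p.1))

theorem mem_revA (n : ℕ) (A : Finset (ℕ × ℕ)) (x y : ℕ) :
    (x, y) ∈ revA n A ↔ ∃ a b, (a, b) ∈ A ∧ x = n+1-b ∧ y = n+1-a := by
  simp only [revA, Finset.mem_image, Prod.exists, Prod.mk.injEq]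
  constructor
  · rintro ⟨a, b, h, h1, h2⟩; exact ⟨a, b, h, h1.symm, h2.symm⟩
  · rintro ⟨a, b, h, h1, h2⟩; exact ⟨a, b, h, h1.symm, h2.symm⟩

theorem cmp_bd {n : ℕ} {A : Finset (ℕ × ℕ)} (h : CmpA n 1 1 0 id A) (a b : ℕ) (hab : (a, b) ∈ A) :
    1 ≤ a ∧ a < b ∧ b ≤ n := by
  obtain ⟨h1, -, h3, h4⟩ := h.1 a b hab
  rcases h4 with h4 | ⟨a, ha, -⟩
  · exact ⟨h4, h1, h3⟩
  · omega

theorem revA_revA (n : ℕ) (A : Finset (ℕ × ℕ)) (h : CmpA n 1 1 0 id A) : revA n (revA n A) = A := by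
  ext ⟨x, y⟩
  rw [mem_revA]
  constructor
  · rintro ⟨a, b, hab, rfl, rfl⟩
    rw [mem_revA] at hab
    obtain ⟨c, d, hcd, rfl, rfl⟩ := hab
    have := cmp_bd h c d hcd
    rwa [show n+1-(n+1-c) = c by omega, show n+1-(n+1-d) = d by omega]
  · intro hxy
    have := cmp_bd h x y hxy
    exact ⟨n+1-y, n+1-x, (mem_revA _ _ _ _).2 ⟨x, y, hxy, rfl, rfl⟩, by omega, by omega⟩

theorem revA_cmp (n : ℕ) (A : Finset (ℕ × ℕ)) (h : CmpA n 1 1 0 id A) : CmpA n 1 1 0 id (revA n A) := by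
  refine ⟨?_, ?_, ?_, ?_⟩
  · intro x y hxy
    obtain ⟨a, b, hab, rfl, rfl⟩ := (mem_revA _ _ _ _).1 hxy
    have := cmp_bd h a b hab
    omega
  · intro x y y' h1 h2
    obtain ⟨a, b, hab, rfl, rfl⟩ := (mem_revA _ _ _ _).1 h1
    obtain ⟨c, d, hcd, h3, rfl⟩ := (mem_revA _ _ _ _).1 h2
    have := cmp_bd h a b hab
    have := cmp_bd h c d hcd
    obtain rfl : b = d := by omega
    rw [h.2.2.1 a c b hab hcd]
  · intro x x' y h1 h2
    obtain ⟨a, b, hab, rfl, rfl⟩ := (mem_revA _ _ _ _).1 h1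
    obtain ⟨c, d, hcd, rfl, h3⟩ := (mem_revA _ _ _ _).1 h2
    have := cmp_bd h a b hab
    have := cmp_bd h c d hcd
    obtain rfl : a = c := by omega
    rw [h.2.1 a b d hab hcd]
  · intro a ha; omega

def RevOK (B B' : ℕ → ℕ → ℕ → Prop) : Prop :=
  ∀ n A, CmpA n 1 1 0 id A → AvA B A → AvA B' (revA n A)

theorem rev132 : RevOK B132 B132 := by
  intro n A hA hB x y z c d e hx hy hz hcd hde hyc hzc hb
  obtain ⟨x, c, hx1, rfl, rfl⟩ := (mem_revA _ _ _ _).1 hx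
  obtain ⟨y, d, hy1, rfl, rfl⟩ := (mem_revA _ _ _ _).1 hy
  obtain ⟨z, e, hz1, rfl, rfl⟩ := (mem_revA _ _ _ _).1 hz
  have := cmp_bd hA _ _ hx1
  have := cmp_bd hA _ _ hy1
  have := cmp_bd hA _ _ hz1
  simp only [B132] at hb
  refine hB y x z d c e hy1 hx1 hz1 ?_ ?_ ?_ ?_ ?_ <;> (try simp only [B132]) <;> omega

theorem rev213 : RevOK B213 B213 := by
  intro n A hA hB x y z c d e hx hy hz hcd hde hyc hzc hb
  obtain ⟨x, c, hx1, rfl, rfl⟩ := (mem_revA _ _ _ _).1 hx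
  obtain ⟨y, d, hy1, rfl, rfl⟩ := (mem_revA _ _ _ _).1 hy
  obtain ⟨z, e, hz1, rfl, rfl⟩ := (mem_revA _ _ _ _).1 hz
  have := cmp_bd hA _ _ hx1
  have := cmp_bd hA _ _ hy1
  have := cmp_bd hA _ _ hz1
  simp only [B213] at hb
  refine hB x z y c e d hx1 hz1 hy1 ?_ ?_ ?_ ?_ ?_ <;> (try simp only [B213]) <;> omega

theorem rev321 : RevOK B321 B321 := by
  intro n A hA hB x y z c d e hx hy hz hcd hde hyc hzc hb
  obtain ⟨x, c, hx1, rfl, rfl⟩ := (mem_revA _ _ _ _).1 hx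
  obtain ⟨y, d, hy1, rfl, rfl⟩ := (mem_revA _ _ _ _).1 hy
  obtain ⟨z, e, hz1, rfl, rfl⟩ := (mem_revA _ _ _ _).1 hz
  have := cmp_bd hA _ _ hx1
  have := cmp_bd hA _ _ hy1
  have := cmp_bd hA _ _ hz1
  simp only [B321] at hb
  refine hB z y x e d c hz1 hy1 hx1 ?_ ?_ ?_ ?_ ?_ <;> (try simp only [B321]) <;> omega

theorem rev231 : RevOK B312 B231 := by
  intro n A hA hB x y z c d e hx hy hz hcd hde hyc hzc hb
  obtain ⟨x, c, hx1, rfl, rfl⟩ := (mem_revA _ _ _ _).1 hx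
  obtain ⟨y, d, hy1, rfl, rfl⟩ := (mem_revA _ _ _ _).1 hy
  obtain ⟨z, e, hz1, rfl, rfl⟩ := (mem_revA _ _ _ _).1 hz
  have := cmp_bd hA _ _ hx1
  have := cmp_bd hA _ _ hy1
  have := cmp_bd hA _ _ hz1
  simp only [B231] at hb
  refine hB z x y e c d hz1 hx1 hy1 ?_ ?_ ?_ ?_ ?_ <;> (try simp only [B312]) <;> omega

theorem rev312 : RevOK B231 B312 := by
  intro n A hA hB x y z c d e hx hy hz hcd hde hyc hzc hb
  obtain ⟨x, c, hx1, rfl, rfl⟩ := (mem_revA _ _ _ _).1 hx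
  obtain ⟨y, d, hy1, rfl, rfl⟩ := (mem_revA _ _ _ _).1 hy
  obtain ⟨z, e, hz1, rfl, rfl⟩ := (mem_revA _ _ _ _).1 hz
  have := cmp_bd hA _ _ hx1
  have := cmp_bd hA _ _ hy1
  have := cmp_bd hA _ _ hz1
  simp only [B312] at hb
  refine hB y z x d e c hy1 hz1 hx1 ?_ ?_ ?_ ?_ ?_ <;> (try simp only [B231]) <;> omega

theorem Xs_rev (B1 B2 C1 C2 : ℕ → ℕ → ℕ → Prop) (h1 : RevOK B1 C1) (h1' : RevOK C1 B1)
    (h2 : RevOK B2 C2) (h2' : RevOK C2 B2) (n : ℕ) :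
    (Xs (BOr B1 B2) n 1 1 0 id bot2).card = (Xs (BOr C1 C2) n 1 1 0 id bot2).card := by
  refine Finset.card_nbij' (revA n) (revA n) ?_ ?_ ?_ ?_
  · intro A hA
    rw [Finset.mem_coe, mem_Xs_init] at hA ⊢
    exact ⟨revA_cmp n A hA.1, h1 n A hA.1 hA.2.1, h2 n A hA.1 hA.2.2⟩
  · intro A hA
    rw [Finset.mem_coe, mem_Xs_init] at hA ⊢
    exact ⟨revA_cmp n A hA.1, h1' n A hA.1 hA.2.1, h2' n A hA.1 hA.2.2⟩
  · intro A hA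
    rw [Finset.mem_coe, mem_Xs_init] at hA
    exact revA_revA n A hA.1
  · intro A hA
    rw [Finset.mem_coe, mem_Xs_init] at hA
    exact revA_revA n A hA.1

theorem pcount_Wt (σ τ : Equiv.Perm (Fin 3)) (h : ClassIPair σ τ) (n : ℕ) :
    pcount2 σ τ n = Wt n 0 := by
  rcases h with h | h | h | h | h | h | h | h | h <;> obtain ⟨rfl, rfl⟩ := h
  · rw [pcount2_eq _ _ _ _ ok123 ok213, Xs_Wt _ okA starA]
  · rw [pcount2_eq _ _ _ _ ok132 ok213, Xs_Wt _ okB starB]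
  · rw [pcount2_eq _ _ _ _ ok132 ok231, Xs_Wt _ okC starC]
  · rw [pcount2_eq _ _ _ _ ok132 ok312, Xs_rev _ _ _ _ rev132 rev132 rev231 rev312,
      Xs_Wt _ okC starC]
  · rw [pcount2_eq _ _ _ _ ok213 ok231, Xs_rev _ _ _ _ rev213 rev213 rev312 rev231,
      Xs_Wt _ okF starF]
  · rw [pcount2_eq _ _ _ _ ok213 ok312, Xs_Wt _ okF starF]
  · rw [pcount2_eq _ _ _ _ ok231 ok312, Xs_Wt _ okG starG]
  · rw [pcount2_eq _ _ _ _ ok231 ok321, Xs_rev _ _ _ _ rev312 rev231 rev321 rev321,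
      Xs_Wt _ okI starI]
  · rw [pcount2_eq _ _ _ _ ok312 ok321, Xs_Wt _ okI starI]

/-- For every pair `{σ,τ}` in class I, the generating function
`B(z) = Σ_{n≥0}|P_n(σ,τ)| zⁿ` satisfies
`(2(1−3z+3z²)B − (2−3z+z²))² = z²(1−6z+z²)`, i.e.
`B(z) = (2−3z+z² − z√(1−6z+z²)) / (2(1−3z+3z²))`. -/
theorem gf_partitions_classI
    (σ τ : Equiv.Perm (Fin 3)) (h : ClassIPair σ τ) :
    (2 * (1 - 3 * PowerSeries.X + 3 * PowerSeries.X ^ 2) *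
          (PowerSeries.mk fun n => (pcount2 σ τ n : ℚ)) -
        (2 - 3 * PowerSeries.X + PowerSeries.X ^ 2)) ^ 2 =
      PowerSeries.X ^ 2 * (1 - 6 * PowerSeries.X + PowerSeries.X ^ 2) := by
  simp only [pcount_Wt σ τ h]
  exact gf_Wt
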